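/- arXiv:2505.11273 — 2 statements merged into one kernel-verified Lean document; each statement's English description precedes it below -/
import Mathlib

section
/- For every κ ∈ [0,1]^N, the following relationship holds: X_LA(κ) = X_SLA(κ) ⊆ X_SFLA(κ). -/
/-!
Replacing a certificate `(s, r)` by `(s - δ, (r - δ)⁺)` preserves every constraint `s - r i ≤ c i`.
If `δ` is a value of `r` such that at most `α` slacks exceed `δ` but more than `α` are at least `δ`,
the slacks drop by at least `α * δ` in total, so the budget `β ≤ α * s - ∑ i, r i` survives as well,
and at most `α` slacks remain nonzero. For every `p`, more than `α` samples have score at most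
`q p`; at one of them the new slack vanishes, and there `s - δ ≤ κ i * margin ≤ margin`, where
`s - δ > 0` by the budget. Monotonicity of the margin transfers this bound to `q p`.
-/

open Finset

section Shrinking

variable {ι R : Type*} [Fintype ι]

lemma exists_card_lt_le_and_lt_card_le [LinearOrder R] (r : ι → R) {c : ℝ} (hc : 0 ≤ c)
    (hcard : c < Fintype.card ι) :
    ∃ i, (#{j | r i < r j} : ℝ) ≤ c ∧ c < #{j | r i ≤ r j} := by
  have : Nonempty ι := Fintype.card_pos_iff.1 (by exact_mod_cast hc.trans_lt hcard)
  obtain ⟨m, hm⟩ := Finite.exists_min r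
  have hne : ({i | c < #{j | r i ≤ r j}} : Finset ι).Nonempty := ⟨m, by simpa [hm] using hcard⟩
  obtain ⟨i, hi, hmax⟩ := exists_max_image _ r hne
  rw [mem_filter_univ] at hi
  refine ⟨i, not_lt.1 fun hlt => ?_, hi⟩
  have habove : ({j | r i < r j} : Finset ι).Nonempty :=
    card_pos.1 (by exact_mod_cast hc.trans_lt hlt)
  obtain ⟨l, hl, hmin⟩ := exists_min_image _ r habove
  have hsub : ({j | r i < r j} : Finset ι) ⊆ ({j | r l ≤ r j} : Finset ι) :=
    fun j hj => (mem_filter_univ j).2 (hmin j hj)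
  have hcl : c < #{j | r l ≤ r j} := hlt.trans_le (by exact_mod_cast card_le_card hsub)
  exact (hmax l ((mem_filter_univ l).2 hcl)).not_gt ((mem_filter_univ l).1 hl)

lemma card_mul_add_sum_posPart_sub_le {r : ι → ℝ} (hr : ∀ i, 0 ≤ r i) (δ : ℝ) :
    #{i | δ ≤ r i} * δ + ∑ i, (r i - δ)⁺ ≤ ∑ i, r i := by
  have hcard : #{i | δ ≤ r i} * δ = ∑ i, if δ ≤ r i then δ else 0 := by
    rw [← sum_filter, sum_const, nsmul_eq_mul]
  rw [hcard, ← sum_add_distrib]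
  refine sum_le_sum fun i _ => ?_
  split_ifs with hi
  · rw [posPart_of_nonneg (sub_nonneg.2 hi), add_sub_cancel]
  · rw [posPart_of_nonpos (sub_nonpos.2 (not_le.1 hi).le), add_zero]
    exact hr i

lemma exists_shrinkage {r : ι → ℝ} (hr : ∀ i, 0 ≤ r i) {α : ℝ} (hα : 0 ≤ α) :
    ∃ δ, α * δ + ∑ i, (r i - δ)⁺ ≤ ∑ i, r i ∧ (#{i | δ < r i} : ℝ) ≤ α := by
  rcases lt_or_ge α (Fintype.card ι) with hcard | hcard
  · obtain ⟨i, habove, hatLeast⟩ := exists_card_lt_le_and_lt_card_le r hα hcard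
    refine ⟨r i, ?_, habove⟩
    calc α * r i + ∑ j, (r j - r i)⁺ ≤ #{j | r i ≤ r j} * r i + ∑ j, (r j - r i)⁺ := by
          gcongr
          exact hr i
      _ ≤ ∑ j, r j := card_mul_add_sum_posPart_sub_le hr (r i)
  · refine ⟨0, by simp [posPart_of_nonneg (hr _)], le_trans ?_ hcard⟩
    exact_mod_cast card_le_univ _

lemma exists_budget_with_few_slacks {α β s : ℝ} {r : ι → ℝ} (hα : 0 ≤ α) (hr : ∀ i, 0 ≤ r i)
    (hbudget : β ≤ α * s - ∑ i, r i) :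
    ∃ s' : ℝ, ∃ r' : ι → ℝ, (∀ i, 0 ≤ r' i) ∧ β ≤ α * s' - ∑ i, r' i ∧
      (∀ i, s' - r' i ≤ s - r i) ∧ (#{i | 0 < r' i} : ℝ) ≤ α := by
  obtain ⟨δ, hsum, hfew⟩ := exists_shrinkage hr hα
  refine ⟨s - δ, fun i => (r i - δ)⁺, fun i => posPart_nonneg _, by linarith, fun i => ?_, ?_⟩
  · linarith [le_posPart (r i - δ)]
  · simpa only [posPart_pos_iff, sub_pos] using hfew

end Shrinking

lemma le_of_pos_of_le_mul {s t y : ℝ} (hs : 0 < s) (ht₀ : 0 ≤ t) (ht₁ : t ≤ 1) (h : s ≤ t * y) :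
    s ≤ y :=
  h.trans (mul_le_of_le_one_left (pos_of_mul_pos_right (hs.trans_le h) ht₀).le ht₁)

lemma exists_le_and_eq_zero_of_card_lt {ι T : Type*} [Fintype ι] [LE T] [DecidableLE T]
    {v : ι → T} {q : T} {r : ι → ℝ} (hr : ∀ i, 0 ≤ r i)
    (hcard : #{i | 0 < r i} < #{i | v i ≤ q}) :
    ∃ i, v i ≤ q ∧ r i = 0 := by
  obtain ⟨i, hi, hri⟩ := exists_mem_notMem_of_card_lt_card hcard
  rw [mem_filter_univ] at hi hri
  exact ⟨i, hi, le_antisymm (not_lt.1 hri) (hr i)⟩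

section Approximations

variable {ι J 𝒳 T : Type*} [Fintype ι]

/-- The decisions `x ∈ X` certified by a level `s ≥ 0` and slacks `r ≥ 0` satisfying the budget
`β ≤ α * s - ∑ i, r i` and the constraints `C x s r`; the paper has `α = εN` and `β = θN`. -/
def certifiedSet (X : Set 𝒳) (α β : ℝ) (C : 𝒳 → ℝ → (ι → ℝ) → Prop) : Set 𝒳 :=
  {x | x ∈ X ∧ ∃ s : ℝ, ∃ r : ι → ℝ,
    0 ≤ s ∧ (∀ i, 0 ≤ r i) ∧ β ≤ α * s - ∑ i, r i ∧ C x s r}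

lemma certifiedSet_mono {X : Set 𝒳} {α β : ℝ} {C C' : 𝒳 → ℝ → (ι → ℝ) → Prop}
    (h : ∀ x s r, C x s r → C' x s r) : certifiedSet X α β C ⊆ certifiedSet X α β C' :=
  fun x ⟨hx, s, r, hs, hr, hbudget, hC⟩ => ⟨hx, s, r, hs, hr, hbudget, h x s r hC⟩

/-- The set `X_LA(κ)`. The safety margin `f i p x` of sample `i` in constraint `p` is encoded as
`margin p (score p i) x`, so that it depends on the sample only through its score. -/
def linearApprox (X : Set 𝒳) (α β : ℝ) (margin : J → T → 𝒳 → ℝ) (score : J → ι → T)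
    (κ : ι → ℝ) : Set 𝒳 :=
  certifiedSet X α β fun x s r => ∀ i p, s - r i ≤ κ i * margin p (score p i) x

/-- The set `X_SLA(κ)`: `linearApprox` strengthened by the requirement that the margin at the
threshold score `q p` is at least the level `s`. -/
def strengthenedLinearApprox (X : Set 𝒳) (α β : ℝ) (margin : J → T → 𝒳 → ℝ)
    (score : J → ι → T) (q : J → T) (κ : ι → ℝ) : Set 𝒳 :=
  certifiedSet X α β fun x s r =>
    (∀ i p, s - r i ≤ κ i * margin p (score p i) x) ∧ ∀ p, s ≤ margin p (q p) x

/-- The set `X_SFLA(κ)`: `strengthenedLinearApprox` with the sample constraints kept only for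
the samples in `[N]_p`, those scoring strictly below the threshold `q p`. -/
def strengthenedFastLinearApprox [LT T] (X : Set 𝒳) (α β : ℝ) (margin : J → T → 𝒳 → ℝ)
    (score : J → ι → T) (q : J → T) (κ : ι → ℝ) : Set 𝒳 :=
  certifiedSet X α β fun x s r =>
    (∀ p i, score p i < q p → s - r i ≤ κ i * margin p (score p i) x) ∧
      ∀ p, s ≤ margin p (q p) x

variable {X : Set 𝒳} {α β : ℝ} {margin : J → T → 𝒳 → ℝ} {score : J → ι → T} {q : J → T}
  {κ : ι → ℝ}

lemma strengthenedLinearApprox_subset_linearApprox :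
    strengthenedLinearApprox X α β margin score q κ ⊆ linearApprox X α β margin score κ :=
  certifiedSet_mono fun _ _ _ h => h.1

lemma strengthenedLinearApprox_subset_strengthenedFastLinearApprox [LT T] :
    strengthenedLinearApprox X α β margin score q κ ⊆
      strengthenedFastLinearApprox X α β margin score q κ :=
  certifiedSet_mono fun _ _ _ h => ⟨fun p i _ => h.1 i p, h.2⟩

lemma linearApprox_subset_strengthenedLinearApprox [Preorder T] [DecidableLE T] (hβ : 0 < β)
    (hmargin : ∀ p x, Monotone fun t => margin p t x)
    (hq : ∀ p, α < #{i | score p i ≤ q p}) (hκ : ∀ i, 0 ≤ κ i ∧ κ i ≤ 1) :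
    linearApprox X α β margin score κ ⊆ strengthenedLinearApprox X α β margin score q κ := by
  rintro x ⟨hx, s, r, hs, hr, hbudget, hsample⟩
  have hα : 0 < α :=
    pos_of_mul_pos_left (by linarith [sum_nonneg fun i (_ : i ∈ univ) => hr i]) hs
  obtain ⟨s', r', hr', hbudget', hshrink, hfew⟩ := exists_budget_with_few_slacks hα.le hr hbudget
  have hs' : 0 < s' :=
    pos_of_mul_pos_right (by linarith [sum_nonneg fun i (_ : i ∈ univ) => hr' i]) hα.le
  have hsample' : ∀ i p, s' - r' i ≤ κ i * margin p (score p i) x :=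
    fun i p => (hshrink i).trans (hsample i p)
  refine ⟨hx, s', r', hs'.le, hr', hbudget', hsample', fun p => ?_⟩
  obtain ⟨i, hi, hri⟩ :=
    exists_le_and_eq_zero_of_card_lt hr' (Nat.cast_lt.1 (hfew.trans_lt (hq p)))
  have hlevel : s' ≤ κ i * margin p (score p i) x := by simpa [hri] using hsample' i p
  calc s' ≤ margin p (score p i) x := le_of_pos_of_le_mul hs' (hκ i).1 (hκ i).2 hlevel
    _ ≤ margin p (q p) x := hmargin p x hi

theorem stmt_3_general [Preorder T] [DecidableLE T] (hβ : 0 < β)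
    (hmargin : ∀ p x, Monotone fun t => margin p t x)
    (hq : ∀ p, α < #{i | score p i ≤ q p}) (hκ : ∀ i, 0 ≤ κ i ∧ κ i ≤ 1) :
    linearApprox X α β margin score κ = strengthenedLinearApprox X α β margin score q κ ∧
      strengthenedLinearApprox X α β margin score q κ ⊆
        strengthenedFastLinearApprox X α β margin score q κ :=
  ⟨(linearApprox_subset_strengthenedLinearApprox hβ hmargin hq hκ).antisymm
      strengthenedLinearApprox_subset_linearApprox,
    strengthenedLinearApprox_subset_strengthenedFastLinearApprox⟩

end Approximations

lemma lt_card_le_comp_sort {N : ℕ} {T : Type*} [LinearOrder T] (v : Fin N → T) (j : Fin N) :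
    (j : ℕ) < #{i | v i ≤ (v ∘ Tuple.sort v) j} := by
  have hsub : (Iic j).map (Tuple.sort v).toEmbedding ⊆
      ({i | v i ≤ (v ∘ Tuple.sort v) j} : Finset (Fin N)) := by
    intro i hi
    obtain ⟨l, hl, rfl⟩ := mem_map.1 hi
    exact (mem_filter_univ _).2 (Tuple.monotone_sort v (mem_Iic.1 hl))
  calc (j : ℕ) < #((Iic j).map (Tuple.sort v).toEmbedding) := by simp
    _ ≤ _ := card_le_card hsub

lemma lt_card_le_comp_sort_floor {N : ℕ} {T : Type*} [LinearOrder T] (v : Fin N → T) {c : ℝ}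
    (hc : ⌊c⌋₊ < N) : c < #{i | v i ≤ (v ∘ Tuple.sort v) ⟨⌊c⌋₊, hc⟩} :=
  (Nat.lt_floor_add_one c).trans_le
    (by exact_mod_cast Nat.succ_le_of_lt (lt_card_le_comp_sort v ⟨⌊c⌋₊, hc⟩))

lemma sSup_dotProduct_image_nonneg {ι : Type*} [Fintype ι] {B : Set (ι → ℝ)} (hB : 0 ∈ B)
    (v : ι → ℝ) : 0 ≤ sSup ((fun u : ι → ℝ => ∑ j, v j * u j) '' B) :=
  Real.sSup_nonneg' ⟨0, ⟨0, hB, by simp⟩, le_rfl⟩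


theorem stmt_3
    (N K L P : ℕ) (hN : 0 < N) (hK : 0 < K) (hL : 0 < L) (hP : 0 < P)
    (nrm : (Fin K → ℝ) → ℝ)
    (nrm_eq_zero : ∀ u : Fin K → ℝ, nrm u = 0 ↔ u = 0)
    (nrm_smul : ∀ (c : ℝ) (u : Fin K → ℝ), nrm (c • u) = |c| * nrm u)
    (nrm_triangle : ∀ u w : Fin K → ℝ, nrm (u + w) ≤ nrm u + nrm w)
    (dstar : (Fin K → ℝ) → ℝ)
    (hdstar : ∀ v : Fin K → ℝ,
      dstar v = sSup ((fun u : Fin K → ℝ => ∑ j, v j * u j) '' {u | nrm u ≤ 1}))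
    (ξ : Fin N → Fin K → ℝ)
    (a : Fin P → Fin L → ℝ) (b : Fin P → Fin K → ℝ) (hb : ∀ p, b p ≠ 0)
    (d : Fin P → ℝ)
    (ε θ : ℝ) (hε0 : 0 < ε) (hε1 : ε < 1) (hθ : 0 < θ)
    (k : ℕ) (hk : k = ⌊ε * (N : ℝ)⌋₊) (hkN : k < N)
    (X : Set (Fin L → ℝ))
    (f : Fin N → Fin P → (Fin L → ℝ) → ℝ)
    (hf : ∀ i p x, f i p x =
      ((∑ j, b p j * ξ i j) + d p - ∑ j, a p j * x j) / dstar (b p))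
    (q : Fin P → ℝ)
    (hq : ∀ p, q p =
      ((fun i => ∑ j, b p j * ξ i j) ∘ Tuple.sort (fun i => ∑ j, b p j * ξ i j)) ⟨k, hkN⟩)
    (XLA : (Fin N → ℝ) → Set (Fin L → ℝ))
    (hXLA : ∀ κ : Fin N → ℝ, XLA κ = {x | x ∈ X ∧ ∃ s : ℝ, ∃ r : Fin N → ℝ,
      0 ≤ s ∧ (∀ i, 0 ≤ r i) ∧
      ε * (N : ℝ) * s - ∑ i, r i ≥ θ * (N : ℝ) ∧
      ∀ i p, κ i * f i p x ≥ s - r i})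
    (XSLA : (Fin N → ℝ) → Set (Fin L → ℝ))
    (hXSLA : ∀ κ : Fin N → ℝ, XSLA κ = {x | x ∈ X ∧ ∃ s : ℝ, ∃ r : Fin N → ℝ,
      0 ≤ s ∧ (∀ i, 0 ≤ r i) ∧
      ε * (N : ℝ) * s - ∑ i, r i ≥ θ * (N : ℝ) ∧
      (∀ i p, κ i * f i p x ≥ s - r i) ∧
      ∀ p, (q p + d p - ∑ j, a p j * x j) / dstar (b p) ≥ s})
    (XSFLA : (Fin N → ℝ) → Set (Fin L → ℝ))
    (hXSFLA : ∀ κ : Fin N → ℝ, XSFLA κ = {x | x ∈ X ∧ ∃ s : ℝ, ∃ r : Fin N → ℝ,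
      0 ≤ s ∧ (∀ i, 0 ≤ r i) ∧
      ε * (N : ℝ) * s - ∑ i, r i ≥ θ * (N : ℝ) ∧
      (∀ p, ∀ i, (∑ j, b p j * ξ i j) < q p → κ i * f i p x ≥ s - r i) ∧
      ∀ p, (q p + d p - ∑ j, a p j * x j) / dstar (b p) ≥ s})
    :
    ∀ κ : Fin N → ℝ, (∀ i, 0 ≤ κ i ∧ κ i ≤ 1) →
      XLA κ = XSLA κ ∧ XSLA κ ⊆ XSFLA κ := by
  intro κ hκ
  subst hk
  have hdstar_nonneg : ∀ p, 0 ≤ dstar (b p) := fun p => by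
    rw [hdstar]
    exact sSup_dotProduct_image_nonneg (by simp [(nrm_eq_zero 0).2 rfl]) (b p)
  have hmargin : ∀ p (x : Fin L → ℝ),
      Monotone fun t => (t + d p - ∑ j, a p j * x j) / dstar (b p) :=
    fun p x t t' htt' => div_le_div_of_nonneg_right (by linarith) (hdstar_nonneg p)
  have hq_card : ∀ p, ε * (N : ℝ) < #{i | ∑ j, b p j * ξ i j ≤ q p} := fun p =>
    hq p ▸ lt_card_le_comp_sort_floor (fun i => ∑ j, b p j * ξ i j) hkN
  simp only [hXLA, hXSLA, hXSFLA, hf]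
  exact stmt_3_general (mul_pos hθ (Nat.cast_pos.2 hN)) hmargin hq_card hκ
end

section
/- The distance from a point to the unsafe set admits the analytical expression: for every x ∈ ℝ^L and every ξ ∈ ℝ^K, inf{‖ξ − ξ'‖ : ξ' ∈ ℝ^K, ξ' ∉ S(x)} = min_{p∈[P]} ((b_p^⊤ξ + d_p − a_p^⊤x)/‖b_p‖_*)^+ = (min_{p∈[P]} (b_p^⊤ξ + d_p − a_p^⊤x)/‖b_p‖_*)^+. -/
/-!
The unsafe set is a union of open half-spaces `{u | f i u + c i < 0}`, so it suffices to know how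
far `v` is from each of them. A step of length less than `r` lowers `f` by at most `r * ‖f‖_*`, and
a step of length `r` lowers it by almost that much when its direction nearly attains the dual norm;
hence the half-space `{u | f u + c < 0}` is at distance `((f v + c) / ‖f‖_*)⁺`. Taking the positive
part is continuous and monotone, so it commutes with the infimum over the half-spaces.
-/

open Set

section

variable {V : Type*} [AddCommGroup V] [Module ℝ V] {p : Seminorm ℝ V} {f : Module.Dual ℝ V}

/-- The dual norm of a linear functional with respect to a seminorm, as a real number; it is the
junk value `0` when the functional is unbounded on the unit ball. -/
noncomputable def dualNorm (p : Seminorm ℝ V) (f : Module.Dual ℝ V) : ℝ :=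
  sSup (f '' {u | p u ≤ 1})

theorem bddAbove_image_unitBall [FiniteDimensional ℝ V] (hp : ∀ u, p u = 0 → u = 0)
    (f : Module.Dual ℝ V) : BddAbove (f '' {u | p u ≤ 1}) := by
  let : NormedAddCommGroup V :=
    AddGroupNorm.toNormedAddCommGroup { p.toAddGroupSeminorm with eq_zero_of_map_eq_zero' := hp }
  let : NormedSpace ℝ V := ⟨fun a u => (map_smul_eq_mul p a u).le⟩
  refine ⟨‖f.toContinuousLinearMap‖, ?_⟩
  rintro _ ⟨u, hu, rfl⟩
  exact (le_abs_self _).trans (f.toContinuousLinearMap.unit_le_opNorm u hu)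

theorem apply_le_mul_dualNorm (hfp : BddAbove (f '' {u | p u ≤ 1})) {r : ℝ} {u : V}
    (hu : p u < r) : f u ≤ r * dualNorm p f := by
  have hr : 0 < r := (apply_nonneg p u).trans_lt hu
  have hmem : p (r⁻¹ • u) ≤ 1 := by
    rw [map_smul_eq_mul, Real.norm_of_nonneg (inv_pos.mpr hr).le]
    exact inv_mul_le_one_of_le₀ hu.le hr.le
  calc f u = r * f (r⁻¹ • u) := by rw [map_smul, smul_eq_mul, mul_inv_cancel_left₀ hr.ne']
    _ ≤ r * dualNorm p f := by gcongr; exact le_csSup hfp (mem_image_of_mem f hmem)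

theorem dualNorm_pos (hf : f ≠ 0) (hfp : BddAbove (f '' {u | p u ≤ 1})) : 0 < dualNorm p f := by
  obtain ⟨u, hu⟩ := LinearMap.surjective hf 1
  have hle : 1 ≤ (p u + 1) * dualNorm p f :=
    hu.ge.trans (apply_le_mul_dualNorm hfp (lt_add_one (p u)))
  exact pos_of_mul_pos_right (one_pos.trans_le hle) (by positivity)

theorem exists_lt_apply_of_lt_dualNorm {r : ℝ} (hr : r < dualNorm p f) :
    ∃ u, p u ≤ 1 ∧ r < f u := by
  have hne : (f '' {u | p u ≤ 1}).Nonempty := ⟨f 0, 0, by simp, rfl⟩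
  obtain ⟨_, ⟨u, hu, rfl⟩, hru⟩ := exists_lt_of_lt_csSup hne hr
  exact ⟨u, hu, hru⟩

theorem div_dualNorm_le_of_apply_add_neg (hf : f ≠ 0) (hfp : BddAbove (f '' {u | p u ≤ 1}))
    {c : ℝ} {u : V} (v : V) (hu : f u + c < 0) : (f v + c) / dualNorm p f ≤ p (v - u) := by
  refine le_of_forall_gt_imp_ge_of_dense fun r hr => ?_
  rw [div_le_iff₀ (dualNorm_pos hf hfp)]
  calc f v + c ≤ f (v - u) := by rw [map_sub]; linarith
    _ ≤ r * dualNorm p f := apply_le_mul_dualNorm hfp hr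

theorem exists_apply_add_neg_of_div_dualNorm_lt (hf : f ≠ 0) (hfp : BddAbove (f '' {u | p u ≤ 1}))
    {c r : ℝ} {v : V} (hr : 0 < r) (hvr : (f v + c) / dualNorm p f < r) :
    ∃ u, f u + c < 0 ∧ p (v - u) ≤ r := by
  have hvr' : (f v + c) / r < dualNorm p f := (div_lt_comm₀ (dualNorm_pos hf hfp) hr).mp hvr
  obtain ⟨w, hw, hlt⟩ := exists_lt_apply_of_lt_dualNorm hvr'
  refine ⟨v - r • w, ?_, ?_⟩
  · rw [div_lt_iff₀' hr] at hlt
    rw [map_sub, map_smul, smul_eq_mul]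
    linarith
  · rw [sub_sub_cancel, map_smul_eq_mul, Real.norm_of_nonneg hr.le]
    exact mul_le_of_le_one_right hr.le hw

theorem sInf_image_seminorm_sub {ι : Type*} [Nonempty ι] {f : ι → Module.Dual ℝ V}
    (hf : ∀ i, f i ≠ 0) (hfp : ∀ i, BddAbove (f i '' {u | p u ≤ 1})) (c : ι → ℝ) (v : V) :
    sInf ((fun u => p (v - u)) '' {u | ∃ i, f i u + c i < 0}) =
      ⨅ i, max ((f i v + c i) / dualNorm p (f i)) 0 := by
  apply le_antisymm
  · refine le_ciInf fun i => le_of_forall_gt_imp_ge_of_dense fun r hr => ?_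
    obtain ⟨hvr, hr₀⟩ := max_lt_iff.mp hr
    obtain ⟨u, hu, hur⟩ := exists_apply_add_neg_of_div_dualNorm_lt (hf i) (hfp i) hr₀ hvr
    have hbdd : BddBelow ((fun u => p (v - u)) '' {u | ∃ i, f i u + c i < 0}) :=
      ⟨0, forall_mem_image.mpr fun u _ => apply_nonneg p (v - u)⟩
    exact (csInf_le hbdd (mem_image_of_mem _ ⟨i, hu⟩)).trans hur
  · have hne : {u | ∃ i, f i u + c i < 0}.Nonempty := by
      let i := Classical.arbitrary ι
      obtain ⟨u, hu⟩ := LinearMap.surjective (hf i) (-c i - 1)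
      exact ⟨u, i, by rw [hu]; linarith⟩
    have hbdd : BddBelow (range fun i => max ((f i v + c i) / dualNorm p (f i)) 0) :=
      ⟨0, forall_mem_range.mpr fun i => le_max_right _ _⟩
    refine le_csInf (hne.image _) (forall_mem_image.mpr fun u ⟨i, hu⟩ => ?_)
    exact ciInf_le_of_le hbdd i
      (max_le (div_dualNorm_le_of_apply_add_neg (hf i) (hfp i) v hu) (apply_nonneg p (v - u)))

end

theorem ciInf_max_const {ι α : Type*} [Nonempty ι] [ConditionallyCompleteLinearOrder α]
    [TopologicalSpace α] [OrderTopology α] {g : ι → α} (hg : BddBelow (range g)) (a : α) :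
    ⨅ i, max (g i) a = max (⨅ i, g i) a :=
  (Monotone.map_ciInf_of_continuousAt (continuous_id.max continuous_const).continuousAt
    (monotone_id.max monotone_const) hg).symm

theorem stmt_9_general {ι V : Type*} [Nonempty ι] [AddCommGroup V] [Module ℝ V]
    {p : Seminorm ℝ V} {f : ι → Module.Dual ℝ V} (hf : ∀ i, f i ≠ 0)
    (hfp : ∀ i, BddAbove (f i '' {u | p u ≤ 1})) (c : ι → ℝ) (v : V)
    (hbdd : BddBelow (range fun i => (f i v + c i) / dualNorm p (f i))) :
    sInf ((fun u => p (v - u)) '' {u | ∃ i, f i u + c i < 0}) =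
        ⨅ i, max ((f i v + c i) / dualNorm p (f i)) 0 ∧
      ⨅ i, max ((f i v + c i) / dualNorm p (f i)) 0 =
        max (⨅ i, (f i v + c i) / dualNorm p (f i)) 0 :=
  ⟨sInf_image_seminorm_sub hf hfp c v, ciInf_max_const hbdd 0⟩

theorem stmt_9
    (K L P : ℕ) (hK : 0 < K) (hL : 0 < L) (hP : 0 < P)
    (nrm : (Fin K → ℝ) → ℝ)
    (nrm_eq_zero : ∀ u : Fin K → ℝ, nrm u = 0 ↔ u = 0)
    (nrm_smul : ∀ (c : ℝ) (u : Fin K → ℝ), nrm (c • u) = |c| * nrm u)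
    (nrm_triangle : ∀ u w : Fin K → ℝ, nrm (u + w) ≤ nrm u + nrm w)
    (dstar : (Fin K → ℝ) → ℝ)
    (hdstar : ∀ v : Fin K → ℝ,
      dstar v = sSup ((fun u : Fin K → ℝ => ∑ j, v j * u j) '' {u | nrm u ≤ 1}))
    (a : Fin P → Fin L → ℝ) (b : Fin P → Fin K → ℝ) (hb : ∀ p, b p ≠ 0)
    (d : Fin P → ℝ)
    (S : (Fin L → ℝ) → Set (Fin K → ℝ))
    (hS : ∀ x, S x = {u | ∀ p, 0 ≤ (∑ j, b p j * u j) + d p - ∑ j, a p j * x j})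
    :
    ∀ (x : Fin L → ℝ) (ξ : Fin K → ℝ),
      sInf ((fun u => nrm (ξ - u)) '' {u | u ∉ S x}) =
        (⨅ p, max (((∑ j, b p j * ξ j) + d p - ∑ j, a p j * x j) / dstar (b p)) 0) ∧
      (⨅ p, max (((∑ j, b p j * ξ j) + d p - ∑ j, a p j * x j) / dstar (b p)) 0) =
        max (⨅ p, ((∑ j, b p j * ξ j) + d p - ∑ j, a p j * x j) / dstar (b p)) 0 := by
  intro x ξ
  have : Nonempty (Fin P) := ⟨⟨0, hP⟩⟩
  let p : Seminorm ℝ (Fin K → ℝ) := Seminorm.of nrm nrm_triangle nrm_smul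
  simp only [hS, hdstar, mem_ofPred_eq, not_forall, not_le, add_sub_assoc]
  exact stmt_9_general (p := p) (f := fun i => dotProductEquiv ℝ (Fin K) (b i))
    (fun i => (dotProductEquiv ℝ (Fin K)).map_ne_zero_iff.mpr (hb i))
    (fun _ => bddAbove_image_unitBall (fun u => (nrm_eq_zero u).mp) _)
    (fun i => d i - ∑ j, a i j * x j) ξ (finite_range _).bddBelow
end
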